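/- Let S and A be nonempty finite sets with |A| ≥ 2, let P be a transition kernel on S×A (i.e., P(·|s,a) is a probability distribution on S for each (s,a)), let r : S×A → [0,1], γ ∈ [0,1), and λ ≥ 0. Suppose V : ℝ^{S×A} → ℝ^S is three times continuously differentiable and satisfies, for every θ ∈ ℝ^{S×A} and every s ∈ S, the entropy-regularized Bellman equation V(θ)(s) = Σ_{a∈A} π_θ(a|s)·( r(s,a) + γ·Σ_{s'∈S} P(s'|s,a)·V(θ)(s') ) + λ·H(π_θ)(s). Then for all θ, u, v, w ∈ ℝ^{S×A}: (i) ‖dV(θ)[u]‖_∞ ≤ ((8 + 10·λ·log|A|)/(1−γ)²)·‖u‖_∞; (ii) ‖d²V(θ)[u,v]‖_∞ ≤ ((40 + 64·λ·log|A|)/(1−γ)³)·‖u‖_∞·‖v‖_∞; (iii) ‖d³V(θ)[u,v,w]‖_∞ ≤ ((480 + 832·λ·log|A|)/(1−γ)⁴)·‖u‖_∞·‖v‖_∞·‖w‖_∞. -/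

import Mathlib

open scoped BigOperators

/-- The softmax policy `π_θ(a|s) = exp θ(s,a) / Σ_{a'} exp θ(s,a')`. -/
noncomputable def softmax {S A : Type*} [Fintype A] (θ : S × A → ℝ) (s : S) (a : A) : ℝ :=
  Real.exp (θ (s, a)) / ∑ a' : A, Real.exp (θ (s, a'))

/-- The vector of per-state entropies `H(π_θ)(s) = -Σ_a π_θ(a|s) log π_θ(a|s)`. -/
noncomputable def entropyVec {S A : Type*} [Fintype A] (θ : S × A → ℝ) : S → ℝ :=
  fun s => -∑ a : A, softmax θ s a * Real.log (softmax θ s a)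

set_option linter.unusedSectionVars false

section helpers

variable {S A : Type*} [Fintype S] [Fintype A] [Nonempty A]

/-- `f` has directional derivative `f'` along `u` everywhere. -/
def DD (u : S × A → ℝ) (f f' : (S × A → ℝ) → ℝ) : Prop :=
  ∀ θ, HasLineDerivAt ℝ f (f' θ) θ u

lemma DD.congr {u : S × A → ℝ} {f f' f'' : (S × A → ℝ) → ℝ} (h : DD u f f')
    (e : ∀ θ, f' θ = f'' θ) : DD u f f'' := fun θ => e θ ▸ h θ

lemma DD.unique {u : S × A → ℝ} {f f' f'' : (S × A → ℝ) → ℝ} (h : DD u f f')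
    (h' : DD u f f'') (θ : S × A → ℝ) : f' θ = f'' θ := HasDerivAt.unique (h θ) (h' θ)

lemma DD.const (u : S × A → ℝ) (c : ℝ) : DD u (fun _ => c) (fun _ => 0) :=
  fun θ => by
    unfold HasLineDerivAt
    exact hasDerivAt_const (0:ℝ) c

lemma DD.add {u : S × A → ℝ} {f f' g g' : (S × A → ℝ) → ℝ} (h : DD u f f') (k : DD u g g') :
    DD u (fun θ => f θ + g θ) (fun θ => f' θ + g' θ) :=
  fun θ => HasDerivAt.fun_add (h θ) (k θ)

lemma DD.neg {u : S × A → ℝ} {f f' : (S × A → ℝ) → ℝ} (h : DD u f f') :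
    DD u (fun θ => - f θ) (fun θ => - f' θ) :=
  fun θ => HasDerivAt.fun_neg (h θ)

lemma DD.sub {u : S × A → ℝ} {f f' g g' : (S × A → ℝ) → ℝ} (h : DD u f f') (k : DD u g g') :
    DD u (fun θ => f θ - g θ) (fun θ => f' θ - g' θ) :=
  fun θ => HasDerivAt.fun_sub (h θ) (k θ)

lemma DD.mul {u : S × A → ℝ} {f f' g g' : (S × A → ℝ) → ℝ} (h : DD u f f') (k : DD u g g') :
    DD u (fun θ => f θ * g θ) (fun θ => f' θ * g θ + f θ * g' θ) :=
  fun θ => by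
    have := HasDerivAt.fun_mul (h θ) (k θ)
    simpa [HasLineDerivAt] using this

lemma DD.const_mul {u : S × A → ℝ} {f f' : (S × A → ℝ) → ℝ} (c : ℝ) (h : DD u f f') :
    DD u (fun θ => c * f θ) (fun θ => c * f' θ) :=
  fun θ => HasDerivAt.const_mul c (h θ)

lemma DD.sum {ι : Type*} [Fintype ι] {u : S × A → ℝ} {f f' : ι → (S × A → ℝ) → ℝ}
    (h : ∀ i, DD u (f i) (f' i)) :
    DD u (fun θ => ∑ i, f i θ) (fun θ => ∑ i, f' i θ) :=
  fun θ => HasDerivAt.fun_sum (fun i _ => h i θ)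

lemma DD.of_differentiable {u : S × A → ℝ} {f : (S × A → ℝ) → S → ℝ} (h : Differentiable ℝ f)
    (s : S) : DD u (fun θ => f θ s) (fun θ => fderiv ℝ f θ u s) := fun θ => by
  have h1 := (h θ).hasFDerivAt.hasLineDerivAt u
  exact (hasDerivAt_pi.1 h1) s

/-- Expectation under the softmax policy. -/
noncomputable def Ex (θ : S × A → ℝ) (s : S) (X : A → ℝ) : ℝ := ∑ a, softmax θ s a * X a

/-- Centered direction. -/
noncomputable def til (u : S × A → ℝ) (s : S) (a : A) (θ : S × A → ℝ) : ℝ :=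
  u (s, a) - Ex θ s (fun b => u (s, b))

lemma Z_pos (θ : S × A → ℝ) (s : S) : 0 < ∑ a' : A, Real.exp (θ (s, a')) :=
  Finset.sum_pos (fun _ _ => Real.exp_pos _) Finset.univ_nonempty

lemma sm_pos (θ : S × A → ℝ) (s : S) (a : A) : 0 < softmax θ s a :=
  div_pos (Real.exp_pos _) (Z_pos θ s)

lemma sm_sum (θ : S × A → ℝ) (s : S) : ∑ a, softmax θ s a = 1 := by
  unfold softmax
  rw [← Finset.sum_div, div_self (Z_pos θ s).ne']

lemma DD_sm (u : S × A → ℝ) (s : S) (a : A) :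
    DD u (fun θ => softmax θ s a) (fun θ => softmax θ s a * til u s a θ) := by
  intro θ
  have he : ∀ b : A, HasDerivAt (fun t : ℝ => Real.exp ((θ + t • u) (s, b)))
      (Real.exp (θ (s, b)) * u (s, b)) 0 := by
    intro b
    have : HasDerivAt (fun t : ℝ => (θ + t • u) (s, b)) (u (s, b)) 0 := by
      have := ((hasDerivAt_id (0:ℝ)).mul_const (u (s,b))).const_add (θ (s,b))
      simpa using this
    simpa using this.exp
  have hz : HasDerivAt (fun t : ℝ => ∑ b, Real.exp ((θ + t • u) (s, b)))
      (∑ b, Real.exp (θ (s, b)) * u (s, b)) 0 := HasDerivAt.fun_sum (fun b _ => he b)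
  have hZ := (Z_pos θ s).ne'
  have := (he a).fun_div hz (by simpa using hZ)
  unfold HasLineDerivAt softmax
  refine this.congr_deriv ?_
  have e : ∑ b, Real.exp (θ (s, b)) * u (s, b)
      = (∑ b, Real.exp (θ (s, b))) * Ex θ s (fun b => u (s, b)) := by
    unfold Ex softmax
    rw [Finset.mul_sum]
    refine Finset.sum_congr rfl fun b _ => ?_
    field_simp
  rw [e]
  simp only [zero_smul, add_zero]
  unfold til
  field_simp

lemma DD_log (u : S × A → ℝ) (s : S) (a : A) :
    DD u (fun θ => Real.log (softmax θ s a)) (fun θ => til u s a θ) := by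
  intro θ
  have := HasDerivAt.log (DD_sm u s a θ) (by simpa using (sm_pos θ s a).ne')
  unfold HasLineDerivAt
  refine this.congr_deriv ?_
  have := (sm_pos θ s a).ne'
  simp only [zero_smul, add_zero]
  field_simp

lemma DD_Ex {u : S × A → ℝ} (s : S) {X X' : A → (S × A → ℝ) → ℝ}
    (h : ∀ a, DD u (X a) (X' a)) :
    DD u (fun θ => Ex θ s (fun a => X a θ))
      (fun θ => Ex θ s (fun a => X' a θ + X a θ * til u s a θ)) := by
  have := DD.sum (fun a => (DD_sm u s a).mul (h a))
  refine this.congr fun θ => ?_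
  unfold Ex
  refine Finset.sum_congr rfl fun b _ => ?_
  ring

/-- Covariance. -/
noncomputable def cv (w v : S × A → ℝ) (s : S) (θ : S × A → ℝ) : ℝ :=
  Ex θ s (fun a => w (s, a) * til v s a θ)

lemma DD_til (w v : S × A → ℝ) (s : S) (a : A) :
    DD v (til w s a) (fun θ => - cv w v s θ) := by
  have := (DD.const v (w (s, a))).sub (DD_Ex s (fun a => DD.const v (w (s, a))))
  refine this.congr fun θ => ?_
  simp [cv]

/-- Derivative of covariance. -/
noncomputable def cv3 (w v u : S × A → ℝ) (s : S) (θ : S × A → ℝ) : ℝ :=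
  Ex θ s (fun a => w (s, a) * (- cv v u s θ) + w (s, a) * til v s a θ * til u s a θ)

lemma DD_cv (w v u : S × A → ℝ) (s : S) :
    DD u (cv w v s) (cv3 w v u s) := 
  DD_Ex s (fun a => (DD_til v u s a).const_mul (w (s, a)))

lemma Ex_add (θ : S × A → ℝ) (s : S) (X Y : A → ℝ) :
    Ex θ s (fun a => X a + Y a) = Ex θ s X + Ex θ s Y := by
  simp [Ex, mul_add, Finset.sum_add_distrib]

lemma Ex_const (θ : S × A → ℝ) (s : S) (c : ℝ) : Ex θ s (fun _ => c) = c := by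
  simp [Ex, ← Finset.sum_mul, sm_sum]

lemma Ex_const_mul (θ : S × A → ℝ) (s : S) (c : ℝ) (X : A → ℝ) :
    Ex θ s (fun a => c * X a) = c * Ex θ s X := by
  simp only [Ex, Finset.mul_sum]
  exact Finset.sum_congr rfl fun b _ => by ring

lemma Ex_til (θ u : S × A → ℝ) (s : S) : Ex θ s (fun a => til u s a θ) = 0 := by
  have : (fun a => til u s a θ) = fun a => u (s, a) + -Ex θ s (fun b => u (s, b)) := by
    ext a; simp [til, sub_eq_add_neg]
  rw [this, Ex_add, Ex_const]; ring

lemma Ex_mono (θ : S × A → ℝ) (s : S) {X Y : A → ℝ} (h : ∀ a, X a ≤ Y a) :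
    Ex θ s X ≤ Ex θ s Y :=
  Finset.sum_le_sum fun a _ => mul_le_mul_of_nonneg_left (h a) (sm_pos θ s a).le

lemma Ex_abs (θ : S × A → ℝ) (s : S) (X : A → ℝ) : |Ex θ s X| ≤ Ex θ s (fun a => |X a|) := by
  refine (Finset.abs_sum_le_sum_abs _ _).trans_eq ?_
  refine Finset.sum_congr rfl fun a _ => ?_
  rw [abs_mul, abs_of_pos (sm_pos θ s a)]

lemma Ex_bound (θ : S × A → ℝ) (s : S) {X T : A → ℝ} {α β K : ℝ} (hβ : 0 ≤ β)
    (hT : Ex θ s (fun a => |T a|) ≤ K) (h : ∀ a, |X a| ≤ α + β * |T a|) :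
    |Ex θ s X| ≤ α + β * K := by
  refine (Ex_abs θ s X).trans ((Ex_mono θ s h).trans ?_)
  rw [Ex_add, Ex_const, Ex_const_mul]
  gcongr

lemma Ex_bound' (θ : S × A → ℝ) (s : S) {X : A → ℝ} {α : ℝ} (h : ∀ a, |X a| ≤ α) :
    |Ex θ s X| ≤ α := by
  refine (Ex_abs θ s X).trans ((Ex_mono θ s h).trans ?_)
  rw [Ex_const]

lemma abs_mul_le' {x y a b : ℝ} (h : |x| ≤ a) (k : |y| ≤ b) : |x * y| ≤ a * b := by
  rw [abs_mul]
  exact mul_le_mul h k (abs_nonneg _) ((abs_nonneg _).trans h)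

lemma abs_add_le' {x y a b : ℝ} (h : |x| ≤ a) (k : |y| ≤ b) : |x + y| ≤ a + b :=
  (abs_add_le x y).trans (add_le_add h k)

lemma abs_neg_le' {x a : ℝ} (h : |x| ≤ a) : |-x| ≤ a := by rwa [abs_neg]

lemma abs_dir {u : S × A → ℝ} (hu : ‖u‖ ≤ 1) (s : S) (a : A) : |u (s, a)| ≤ 1 :=
  (norm_le_pi_norm u (s, a)).trans hu

lemma abs_til {u : S × A → ℝ} (hu : ‖u‖ ≤ 1) (s : S) (a : A) (θ : S × A → ℝ) :
    |til u s a θ| ≤ 2 := by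
  unfold til
  rw [sub_eq_add_neg]
  have := abs_add_le' (abs_dir hu s a) (abs_neg_le' (Ex_bound' θ s (abs_dir hu s)))
  linarith

lemma abs_cv {w v : S × A → ℝ} (hw : ‖w‖ ≤ 1) (hv : ‖v‖ ≤ 1) (s : S) (θ : S × A → ℝ) :
    |cv w v s θ| ≤ 2 := by
  refine Ex_bound' θ s fun a => ?_
  have := abs_mul_le' (abs_dir hw s a) (abs_til hv s a θ)
  linarith

lemma abs_cv3 {w v u : S × A → ℝ} (hw : ‖w‖ ≤ 1) (hv : ‖v‖ ≤ 1) (hu : ‖u‖ ≤ 1)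
    (s : S) (θ : S × A → ℝ) : |cv3 w v u s θ| ≤ 6 := by
  refine Ex_bound' θ s fun a => ?_
  have := abs_add_le' (abs_mul_le' (abs_dir hw s a) (abs_neg_le' (abs_cv hv hu s θ)))
    (abs_mul_le' (abs_mul_le' (abs_dir hw s a) (abs_til hv s a θ)) (abs_til hu s a θ))
  linarith

lemma sm_le_one (θ : S × A → ℝ) (s : S) (a : A) : softmax θ s a ≤ 1 := by
  rw [← sm_sum θ s]
  exact Finset.single_le_sum (f := fun a => softmax θ s a)
    (fun a _ => (sm_pos θ s a).le) (Finset.mem_univ a)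

lemma Ex_log (θ : S × A → ℝ) (s : S) :
    Ex θ s (fun a => |Real.log (softmax θ s a)|) ≤ Real.log (Fintype.card A) := by
  have hn : (0:ℝ) < Fintype.card A := by exact_mod_cast Fintype.card_pos
  have key : ∀ a, softmax θ s a * |Real.log (softmax θ s a)| ≤
      softmax θ s a * Real.log (Fintype.card A) + ((Fintype.card A : ℝ)⁻¹ - softmax θ s a) := by
    intro a
    have hp := sm_pos θ s a
    rw [abs_of_nonpos (Real.log_nonpos hp.le (sm_le_one θ s a))]
    have h1 := Real.log_le_sub_one_of_pos (x := (Fintype.card A * softmax θ s a)⁻¹)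
      (by positivity)
    rw [Real.log_inv, Real.log_mul hn.ne' hp.ne'] at h1
    have h2 := mul_le_mul_of_nonneg_left h1 hp.le
    have h3 : softmax θ s a * ((Fintype.card A * softmax θ s a)⁻¹ - 1) =
      (Fintype.card A : ℝ)⁻¹ - softmax θ s a := by field_simp
    linarith
  refine (Finset.sum_le_sum fun a _ => key a).trans_eq ?_
  rw [Finset.sum_add_distrib, Finset.sum_sub_distrib, ← Finset.sum_mul, sm_sum]
  simp [hn.ne']

lemma contract [Nonempty S] {f : S → ℝ} {γ B : ℝ} (hγ1 : γ < 1)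
    (h : ∀ s, |f s| ≤ γ * ‖f‖ + B) : ‖f‖ ≤ B / (1 - γ) := by
  have h1 : ‖f‖ ≤ γ * ‖f‖ + B := (pi_norm_le_iff_of_nonempty f).2 h
  rw [le_div_iff₀ (by linarith)]
  linarith

/-- Discounted transition. -/
noncomputable def qq (γ : ℝ) (P : S → A → S → ℝ) (s : S) (a : A) (x : S → ℝ) : ℝ :=
  γ * ∑ s', P s a s' * x s'

lemma abs_qq {γ : ℝ} (hγ0 : 0 ≤ γ) {P : S → A → S → ℝ}
    (hP : ∀ s a, (∀ s', 0 ≤ P s a s') ∧ ∑ s', P s a s' = 1) (s : S) (a : A) (x : S → ℝ) :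
    |qq γ P s a x| ≤ γ * ‖x‖ := by
  unfold qq
  rw [abs_mul, abs_of_nonneg hγ0]
  gcongr
  refine (Finset.abs_sum_le_sum_abs _ _).trans ?_
  calc ∑ s', |P s a s' * x s'| ≤ ∑ s', P s a s' * ‖x‖ := by
        refine Finset.sum_le_sum fun s' _ => ?_
        rw [abs_mul, abs_of_nonneg ((hP s a).1 s')]
        exact mul_le_mul_of_nonneg_left (norm_le_pi_norm x s') ((hP s a).1 s')
    _ = ‖x‖ := by rw [← Finset.sum_mul, (hP s a).2, one_mul]

lemma abs_qq' {γ : ℝ} (hγ0 : 0 ≤ γ) (hγ1 : γ < 1) {P : S → A → S → ℝ}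
    (hP : ∀ s a, (∀ s', 0 ≤ P s a s') ∧ ∑ s', P s a s' = 1) (s : S) (a : A) {x : S → ℝ}
    {b : ℝ} (h : ‖x‖ ≤ b) : |qq γ P s a x| ≤ b := by
  refine (abs_qq hγ0 hP s a x).trans ?_
  nlinarith [norm_nonneg x]

lemma DD_qq (γ : ℝ) (P : S → A → S → ℝ) {u : S × A → ℝ} {f : (S × A → ℝ) → S → ℝ}
    (h : Differentiable ℝ f) (s : S) (a : A) :
    DD u (fun θ => qq γ P s a (f θ)) (fun θ => qq γ P s a (fderiv ℝ f θ u)) :=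
  (DD.sum (fun s' => (DD.of_differentiable h s').const_mul (P s a s'))).const_mul γ

lemma step_bound [Nonempty S] {γ : ℝ} (hγ0 : 0 ≤ γ) (hγ1 : γ < 1) {P : S → A → S → ℝ}
    (hP : ∀ s a, (∀ s', 0 ≤ P s a s') ∧ ∑ s', P s a s' = 1) (θ : S × A → ℝ)
    {f : S → ℝ} {X T : S → A → ℝ} {α β K : ℝ} (hβ : 0 ≤ β)
    (hT : ∀ s, Ex θ s (fun a => |T s a|) ≤ K)
    (hf : ∀ s, f s = Ex θ s (fun a => qq γ P s a f + X s a))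
    (h : ∀ s a, |X s a| ≤ α + β * |T s a|) :
    ‖f‖ ≤ (α + β * K) / (1 - γ) := by
  refine contract hγ1 fun s => ?_
  rw [hf s, Ex_add]
  exact abs_add_le' (Ex_bound' θ s fun a => abs_qq hγ0 hP s a f) (Ex_bound θ s hβ (hT s) (h s))

/-- Reduction of multilinear bounds to the unit ball. -/
lemma multi_bound {E F : Type*} [NormedAddCommGroup E] [NormedSpace ℝ E]
    [NormedAddCommGroup F] [NormedSpace ℝ F] {n : ℕ}
    (f : ContinuousMultilinearMap ℝ (fun _ : Fin n => E) F) {C : ℝ}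
    (h : ∀ m : Fin n → E, (∀ i, ‖m i‖ ≤ 1) → ‖f m‖ ≤ C) (m : Fin n → E) :
    ‖f m‖ ≤ C * ∏ i, ‖m i‖ := by
  have e : m = fun i => ‖m i‖ • (‖m i‖⁻¹ • m i) := by
    ext i
    by_cases hi : m i = 0
    · simp [hi]
    · rw [smul_smul, mul_inv_cancel₀ (norm_ne_zero_iff.2 hi), one_smul]
  have h1 : f m = (∏ i, ‖m i‖) • f (fun i => ‖m i‖⁻¹ • m i) := by
    rw [← f.map_smul_univ, ← e]
  have h2 := h (fun i => ‖m i‖⁻¹ • m i) (fun i => by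
    rw [norm_smul, norm_inv, norm_norm]; exact inv_mul_le_one)
  have h0 : 0 ≤ ∏ i, ‖m i‖ := Finset.prod_nonneg fun i _ => norm_nonneg _
  rw [h1, norm_smul, Real.norm_of_nonneg h0, mul_comm]
  gcongr

lemma iter_step {E F : Type*} [NormedAddCommGroup E] [NormedSpace ℝ E]
    [NormedAddCommGroup F] [NormedSpace ℝ F] {n : ℕ} {f : E → F}
    (hf : Differentiable ℝ (iteratedFDeriv ℝ n f)) {G : (Fin n → E) → E → F}
    (h : ∀ m x, iteratedFDeriv ℝ n f x m = G m x) (m : Fin (n + 1) → E) (x : E) :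
    iteratedFDeriv ℝ (n + 1) f x m = fderiv ℝ (G (Fin.tail m)) x (m 0) := by
  rw [iteratedFDeriv_succ_apply_left]
  have h1 : G (Fin.tail m) = fun x => ContinuousMultilinearMap.apply ℝ (fun _ : Fin n => E) F
      (Fin.tail m) (iteratedFDeriv ℝ n f x) := by
    funext x; exact (h _ _).symm
  have h2 := ((ContinuousMultilinearMap.apply ℝ (fun _ : Fin n => E) F
      (Fin.tail m)).hasFDerivAt.comp x (hf x).hasFDerivAt).fderiv
  rw [h1]
  have h3 := congrArg (fun l => l (m 0)) h2
  exact h3.symm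

end helpers

/-- Bounds on the first three directional derivatives of the
entropy-regularized value function of the softmax policy, characterized by the regularized
Bellman equation.  Sup norms are the Pi-type norms. -/
theorem stmt7 {S A : Type*} [Fintype S] [Fintype A] [Nonempty S] [Nonempty A]
    (hA : 2 ≤ Fintype.card A)
    (P : S → A → S → ℝ) (hP : ∀ s a, (∀ s', 0 ≤ P s a s') ∧ ∑ s', P s a s' = 1)
    (r : S → A → ℝ) (hr : ∀ s a, 0 ≤ r s a ∧ r s a ≤ 1)
    (γ : ℝ) (hγ0 : 0 ≤ γ) (hγ1 : γ < 1) (lam : ℝ) (hlam : 0 ≤ lam)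
    (V : (S × A → ℝ) → S → ℝ) (hV : ContDiff ℝ 3 V)
    (hBell : ∀ θ s, V θ s =
      (∑ a : A, softmax θ s a * (r s a + γ * ∑ s', P s a s' * V θ s')) +
        lam * entropyVec θ s)
    (θ u v w : S × A → ℝ) :
    ‖iteratedFDeriv ℝ 1 V θ ![u]‖ ≤
      ((8 + 10 * lam * Real.log (Fintype.card A)) / (1 - γ) ^ 2) * ‖u‖ ∧
    ‖iteratedFDeriv ℝ 2 V θ ![u, v]‖ ≤
      ((40 + 64 * lam * Real.log (Fintype.card A)) / (1 - γ) ^ 3) * ‖u‖ * ‖v‖ ∧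
    ‖iteratedFDeriv ℝ 3 V θ ![u, v, w]‖ ≤
      ((480 + 832 * lam * Real.log (Fintype.card A)) / (1 - γ) ^ 4) * ‖u‖ * ‖v‖ * ‖w‖ := by
  set L : ℝ := Real.log (Fintype.card A) with hL
  have hL2 : 0.69 ≤ L := by
    have h1 : Real.log 2 ≤ L :=
      Real.log_le_log (by norm_num) (by exact_mod_cast hA)
    have := Real.log_two_gt_d9
    linarith
  have hlL : 0.69 * lam ≤ lam * L := by nlinarith
  have hh : 0 < 1 - γ := by linarith
  -- the soft Q function
  let T : S → A → (S × A → ℝ) → ℝ := fun s a θ =>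
    r s a + qq γ P s a (V θ) - lam * Real.log (softmax θ s a)
  have hVT : ∀ s, (fun θ => V θ s) = fun θ => Ex θ s (fun a => T s a θ) := by
    intro s
    funext θ
    rw [hBell]
    simp only [Ex, entropyVec, T, qq, mul_sub, Finset.sum_sub_distrib, mul_neg, Finset.mul_sum,
      ← sub_eq_add_neg]
    congr 1
    exact Finset.sum_congr rfl fun a _ => by ring
  set M : ℝ := 1 + lam * L with hM
  have hM0 : 0 < M := by positivity
  have hlog : ∀ θ s, Ex θ s (fun a => |T s a θ|) ≤ 1 + γ * ‖V θ‖ + lam * L := by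
    intro θ s
    have : ∀ a, |T s a θ| ≤ (1 + γ * ‖V θ‖) + lam * |Real.log (softmax θ s a)| := by
      intro a
      simp only [T, sub_eq_add_neg]
      refine abs_add_le' (abs_add_le' ?_ (abs_qq hγ0 hP s a _)) (abs_neg_le' ?_)
      · rw [abs_of_nonneg (hr s a).1]; exact (hr s a).2
      · rw [abs_mul, abs_of_nonneg hlam]
    refine (Ex_mono θ s this).trans ?_
    rw [Ex_add, Ex_const, Ex_const_mul]
    gcongr
    exact Ex_log θ s
  have hV0 : ∀ θ, ‖V θ‖ ≤ M / (1 - γ) := by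
    intro θ
    refine contract hγ1 fun s => ?_
    have := congrFun (hVT s) θ
    rw [show V θ s = _ from this]
    refine (Ex_abs θ s _).trans ((hlog θ s).trans_eq ?_)
    ring
  have hT : ∀ θ s, Ex θ s (fun a => |T s a θ|) ≤ M / (1 - γ) := by
    intro θ s
    refine (hlog θ s).trans ?_
    have h1 := mul_le_mul_of_nonneg_left (hV0 θ) hγ0
    have h2 : M + γ * (M / (1 - γ)) = M / (1 - γ) := by field_simp; ring
    linarith
  -- derivatives
  let V1 : (S × A → ℝ) → (S × A → ℝ) → S → ℝ := fun w θ => fderiv ℝ V θ w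
  let V2 : (S × A → ℝ) → (S × A → ℝ) → (S × A → ℝ) → S → ℝ := fun v w θ => fderiv ℝ (V1 w) θ v
  let V3 : (S × A → ℝ) → (S × A → ℝ) → (S × A → ℝ) → (S × A → ℝ) → S → ℝ :=
    fun u v w θ => fderiv ℝ (V2 v w) θ u
  have cV1 : ∀ w, ContDiff ℝ 2 (V1 w) := fun w =>
    (hV.fderiv_right (m := 2) (by norm_num)).clm_apply contDiff_const
  have cV2 : ∀ v w, ContDiff ℝ 1 (V2 v w) := fun v w =>
    ((cV1 w).fderiv_right (m := 1) (by norm_num)).clm_apply contDiff_const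
  have dV : Differentiable ℝ V := hV.differentiable (by norm_num)
  have dV1 : ∀ w, Differentiable ℝ (V1 w) := fun w => (cV1 w).differentiable (by norm_num)
  have dV2 : ∀ v w, Differentiable ℝ (V2 v w) := fun v w =>
    (cV2 v w).differentiable (by norm_num)
  have DT : ∀ w s a, DD w (T s a)
      (fun θ => qq γ P s a (V1 w θ) - lam * til w s a θ) := by
    intro w s a
    refine (((DD.const w (r s a)).add (DD_qq γ P dV s a)).sub
      ((DD_log w s a).const_mul lam)).congr fun θ => ?_
    simp [V1]
  have e1 : ∀ w s, (fun θ => V1 w θ s) =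
      fun θ => Ex θ s (fun a => qq γ P s a (V1 w θ) + T s a θ * til w s a θ) := by
    intro w s
    funext θ
    have h1 := DD.of_differentiable (u := w) dV s
    rw [hVT s] at h1
    have h2 := h1.unique (DD_Ex s (DT w s)) θ
    refine h2.trans ?_
    have : (fun a => qq γ P s a (V1 w θ) - lam * til w s a θ + T s a θ * til w s a θ) =
      fun a => (qq γ P s a (V1 w θ) + T s a θ * til w s a θ) + (-lam) * til w s a θ := by
      funext a; ring
    rw [this, Ex_add, Ex_const_mul, Ex_til]
    ring
  have e2 : ∀ v w s, (fun θ => V2 v w θ s) =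
      fun θ => Ex θ s (fun a => qq γ P s a (V2 v w θ) +
        (((qq γ P s a (V1 v θ) - lam * til v s a θ) * til w s a θ
          + T s a θ * (- cv w v s θ))
        + (qq γ P s a (V1 w θ) + T s a θ * til w s a θ) * til v s a θ)) := by
    intro v w s
    funext θ
    have h1 := DD.of_differentiable (u := v) (dV1 w) s
    rw [e1 w s] at h1
    refine (h1.unique (DD_Ex s (fun a => (DD_qq γ P (dV1 w) s a).add
      ((DT v s a).mul (DD_til w v s a)))) θ).trans ?_
    simp only [add_assoc, V2]
  have e3 : ∀ u v w s, (fun θ => V3 u v w θ s) =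
      fun θ => Ex θ s (fun a => qq γ P s a (V3 u v w θ) +
        (((((qq γ P s a (V2 u v θ) - lam * (- cv v u s θ)) * til w s a θ
          + (qq γ P s a (V1 v θ) - lam * til v s a θ) * (- cv w u s θ))
          + ((qq γ P s a (V1 u θ) - lam * til u s a θ) * (- cv w v s θ)
          + T s a θ * (- cv3 w v u s θ)))
        + ((qq γ P s a (V2 u w θ) + ((qq γ P s a (V1 u θ) - lam * til u s a θ) * til w s a θ
            + T s a θ * (- cv w u s θ))) * til v s a θ
          + (qq γ P s a (V1 w θ) + T s a θ * til w s a θ) * (- cv v u s θ)))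
        + (qq γ P s a (V2 v w θ) +
        (((qq γ P s a (V1 v θ) - lam * til v s a θ) * til w s a θ
          + T s a θ * (- cv w v s θ))
        + (qq γ P s a (V1 w θ) + T s a θ * til w s a θ) * til v s a θ)) * til u s a θ)) := by
    intro u v w s
    funext θ
    have h1 := DD.of_differentiable (u := u) (dV2 v w) s
    rw [e2 v w s] at h1
    refine (h1.unique (DD_Ex s (fun a => (DD_qq γ P (dV2 v w) s a).add
      (((((DD_qq γ P (dV1 v) s a).sub ((DD_til v u s a).const_mul lam)).mul (DD_til w u s a)).add
        ((DT u s a).mul (DD_cv w v u s).neg)).add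
        (((DD_qq γ P (dV1 w) s a).add ((DT u s a).mul (DD_til w u s a))).mul
          (DD_til v u s a))))) θ).trans ?_
    simp only [add_assoc, V2, V3]
  -- bounds on the unit ball
  have hlabs : |lam| ≤ lam := by rw [abs_of_nonneg hlam]
  have ht0 : 0 ≤ lam * L := by positivity
  set h : ℝ := 1 - γ with hhdef
  have hh1 : h ≤ 1 := by linarith
  have b1 : ∀ w, ‖w‖ ≤ 1 → ∀ θ, ‖V1 w θ‖ ≤ 2 * M / h ^ 2 := by
    intro w hw θ
    have := step_bound hγ0 hγ1 hP θ (f := V1 w θ) (α := 0) (β := 2) (by norm_num) (hT θ)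
      (fun s => congrFun (e1 w s) θ) (fun s a => by
        rw [zero_add, mul_comm]
        have := abs_mul_le' (abs_til hw s a θ) (le_refl |T s a θ|)
        linarith)
    refine this.trans_eq ?_
    rw [← hhdef]; field_simp; ring
  have b2 : ∀ v w, ‖v‖ ≤ 1 → ‖w‖ ≤ 1 → ∀ θ, ‖V2 v w θ‖ ≤ 24 * M / h ^ 3 := by
    intro v w hv hw θ
    set B1 := 2 * M / h ^ 2
    have := step_bound hγ0 hγ1 hP θ (f := V2 v w θ) (α := 4 * B1 + 4 * lam) (β := 6)
      (by norm_num) (hT θ)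
      (fun s => congrFun (e2 v w s) θ) (fun s a => by
        have t := le_refl |T s a θ|
        have tv := abs_til hv s a θ
        have tw := abs_til hw s a θ
        have qv := abs_qq' hγ0 hγ1 hP s a (b1 v hv θ)
        have qw := abs_qq' hγ0 hγ1 hP s a (b1 w hw θ)
        have := abs_add_le' (abs_add_le'
          (abs_mul_le' (abs_add_le' qv (abs_neg_le' (abs_mul_le' hlabs tv))) tw)
          (abs_mul_le' t (abs_neg_le' (abs_cv hw hv s θ))))
          (abs_mul_le' (abs_add_le' qw (abs_mul_le' t tw)) tv)
        simp only [sub_eq_add_neg]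
        refine this.trans ?_
        linarith)
    refine this.trans ?_
    have e : (4 * B1 + 4 * lam + 6 * (M / h)) / h
        = (8 * M + 4 * (lam * h ^ 2) + 6 * (M * h)) / h ^ 3 := by
      simp only [B1]; field_simp; ring
    rw [e]
    have g1 : lam * h ^ 2 ≤ lam * 1 := by
      gcongr; exact pow_le_one₀ hh.le hh1
    have g2 : M * h ≤ M * 1 := by gcongr
    gcongr
    linarith
  have b3 : ∀ u v w, ‖u‖ ≤ 1 → ‖v‖ ≤ 1 → ‖w‖ ≤ 1 → ∀ θ,
      ‖V3 u v w θ‖ ≤ (480 + 832 * lam * L) / h ^ 4 := by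
    intro u v w hu hv hw θ
    set B1 := 2 * M / h ^ 2
    set B2 := 24 * M / h ^ 3
    have := step_bound hγ0 hγ1 hP θ (f := V3 u v w θ) (α := 6 * B2 + 18 * B1 + 36 * lam) (β := 40)
      (by norm_num) (hT θ)
      (fun s => congrFun (e3 u v w s) θ) (fun s a => by
        have t := le_refl |T s a θ|
        have t0 := abs_nonneg (T s a θ)
        have tu := abs_til hu s a θ
        have tv := abs_til hv s a θ
        have tw := abs_til hw s a θ
        have qu := abs_qq' hγ0 hγ1 hP s a (b1 u hu θ)
        have qv := abs_qq' hγ0 hγ1 hP s a (b1 v hv θ)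
        have qw := abs_qq' hγ0 hγ1 hP s a (b1 w hw θ)
        have quv := abs_qq' hγ0 hγ1 hP s a (b2 u v hu hv θ)
        have quw := abs_qq' hγ0 hγ1 hP s a (b2 u w hu hw θ)
        have qvw := abs_qq' hγ0 hγ1 hP s a (b2 v w hv hw θ)
        have cvu := abs_neg_le' (abs_cv hv hu s θ)
        have cwu := abs_neg_le' (abs_cv hw hu s θ)
        have cwv := abs_neg_le' (abs_cv hw hv s θ)
        have c3 := abs_neg_le' (abs_cv3 hw hv hu s θ)
        have du := abs_add_le' qu (abs_neg_le' (abs_mul_le' hlabs tu))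
        have dv := abs_add_le' qv (abs_neg_le' (abs_mul_le' hlabs tv))
        have := abs_add_le' (abs_add_le'
          (abs_add_le' 
            (abs_add_le' (abs_mul_le' (abs_add_le' quv (abs_neg_le' (abs_mul_le' hlabs cvu))) tw)
              (abs_mul_le' dv cwu))
            (abs_add_le' (abs_mul_le' du cwv) (abs_mul_le' t c3)))
          (abs_add_le' (abs_mul_le' (abs_add_le' quw
              (abs_add_le' (abs_mul_le' du tw) (abs_mul_le' t cwu))) tv)
            (abs_mul_le' (abs_add_le' qw (abs_mul_le' t tw)) cvu)))
          (abs_mul_le' (abs_add_le' qvw (abs_add_le' (abs_add_le'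
            (abs_mul_le' dv tw) (abs_mul_le' t cwv))
            (abs_mul_le' (abs_add_le' qw (abs_mul_le' t tw)) tv))) tu)
        simp only [sub_eq_add_neg]
        refine this.trans ?_
        linarith)
    refine this.trans ?_
    have e : (6 * B2 + 18 * B1 + 36 * lam + 40 * (M / h)) / h
        = (144 * M + 36 * (M * h) + 36 * (lam * h ^ 3) + 40 * (M * h ^ 2)) / h ^ 4 := by
      simp only [B1, B2]; field_simp; ring
    rw [e]
    have g1 : lam * h ^ 3 ≤ lam * 1 := by
      gcongr; exact pow_le_one₀ hh.le hh1
    have g2 : M * h ≤ M * 1 := by gcongr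
    have g3 : M * h ^ 2 ≤ M * 1 := by
      gcongr; exact pow_le_one₀ hh.le hh1
    refine div_le_div_of_nonneg_right ?_ (by positivity)
    linarith
  have i1 : ∀ (m : Fin 1 → (S × A → ℝ)) θ, iteratedFDeriv ℝ 1 V θ m = V1 (m 0) θ := by
    intro m θ
    simp [V1]
  have i2 : ∀ (m : Fin 2 → (S × A → ℝ)) θ,
      iteratedFDeriv ℝ 2 V θ m = V2 (m 0) (m 1) θ := by
    intro m θ
    exact iter_step (hV.differentiable_iteratedFDeriv (by norm_cast)) i1 m θ
  have i3 : ∀ (m : Fin 3 → (S × A → ℝ)) θ,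
      iteratedFDeriv ℝ 3 V θ m = V3 (m 0) (m 1) (m 2) θ := by
    intro m θ
    exact iter_step (hV.differentiable_iteratedFDeriv (by norm_cast)) i2 m θ
  refine ⟨?_, ?_, ?_⟩
  · have := multi_bound (iteratedFDeriv ℝ 1 V θ) (C := (8 + 10 * lam * L) / h ^ 2)
      (fun m hm => by
        rw [i1]
        refine (b1 _ (hm 0) θ).trans ?_
        gcongr
        linarith) ![u]
    simpa using this
  · have := multi_bound (iteratedFDeriv ℝ 2 V θ) (C := (40 + 64 * lam * L) / h ^ 3)
      (fun m hm => by
        rw [i2]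
        refine (b2 _ _ (hm 0) (hm 1) θ).trans ?_
        gcongr
        linarith) ![u, v]
    simpa [Fin.prod_univ_two, mul_assoc] using this
  · have := multi_bound (iteratedFDeriv ℝ 3 V θ) (C := (480 + 832 * lam * L) / h ^ 4)
      (fun m hm => by
        rw [i3]
        exact b3 _ _ _ (hm 0) (hm 1) (hm 2) θ) ![u, v, w]
    simpa [Fin.prod_univ_three, mul_assoc] using this
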